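/- Let κ, c_s, c_p > 0 and n ∈ ℕ. Then there exist ε > 0 and M > 0 such that for all 0 < r < ε, |ξ_{2,n}(r) − (1/(2c_s²) − 1/(2c_p²))| ≤ M r²; in particular ξ_{2,n}(r) → −1/(2c_p²) + 1/(2c_s²) as r → 0⁺. -/

import Mathlib

open Real Filter MeasureTheory

noncomputable def acoef (γ : ℝ) : ℕ → ℕ → ℝ
  | n, m =>
    if m = 0 then 1
    else if n < m then 0
    else if m = n then -(γ / (n : ℝ)) * acoef γ (n - 1) (n - 1)
    else (1 / (2 * γ * (m : ℝ))) *
      (4 * (((m + 1) / 2 : ℕ) : ℝ) ^ 2 * acoef γ n (m + 1)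
        - γ ^ 2 * ∑ k ∈ (Finset.Icc (m - 1) (n - 1)).attach,
            ((n - (k : ℕ) + 1 : ℕ) : ℝ) * acoef γ (k : ℕ) (m - 1))
  termination_by n m => (n, n - m)
  decreasing_by
  · apply Prod.Lex.left; omega
  · apply Prod.Lex.right; omega
  · apply Prod.Lex.left
    have hk := k.2
    simp only [Finset.mem_Icc] at hk
    omega

/-- χ_{k,n} -/
noncomputable def chiC (n : ℕ) (k : ℤ) : ℝ :=
  if k = -2 then (n : ℝ) * ((n : ℝ) - 1)
  else if k = -1 then -4 * (n : ℝ) ^ 2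
  else if k = 0 then 2 * (3 * (n : ℝ) ^ 2 + 3 * (n : ℝ) + 1)
  else if k = 1 then -4 * ((n : ℝ) + 1) ^ 2
  else if k = 2 then ((n : ℝ) + 1) * ((n : ℝ) + 2)
  else 0

/-- the sum ∑_{k=-2}^{2} χ_{k,n} f(n+k), terms with n+k<0 omitted -/
noncomputable def sumChi (n : ℕ) (f : ℕ → ℝ) : ℝ :=
  ∑ k ∈ Finset.Icc (-2 : ℤ) 2,
    if 0 ≤ (n : ℤ) + k then chiC n k * f ((n : ℤ) + k).toNat else 0

noncomputable def besselI0 (z : ℝ) : ℝ := ∑' k : ℕ, (z / 2) ^ (2 * k) / (k.factorial : ℝ) ^ 2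

noncomputable def besselI1 (z : ℝ) : ℝ :=
  ∑' k : ℕ, (z / 2) ^ (2 * k + 1) / ((k.factorial : ℝ) * ((k + 1).factorial : ℝ))

noncomputable def psiH (k : ℕ) : ℝ := ∑ j ∈ Finset.range k, (1 : ℝ) / ((j : ℝ) + 1)

noncomputable def besselS0 (z : ℝ) : ℝ :=
  ∑' k : ℕ, psiH k * (z / 2) ^ (2 * k) / (k.factorial : ℝ) ^ 2

noncomputable def besselS1 (z : ℝ) : ℝ :=
  -(1 / 2) * ∑' k : ℕ, (psiH (k + 1) + psiH k) * (z / 2) ^ (2 * k + 1) /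
    ((k.factorial : ℝ) * ((k + 1).factorial : ℝ))

noncomputable def vPol (γ : ℝ) (n : ℕ) (r : ℝ) : ℝ :=
  ∑ m ∈ Finset.range (n / 2 + 1), acoef γ n (2 * m) * r ^ (2 * m)

noncomputable def wPol (γ : ℝ) (n : ℕ) (r : ℝ) : ℝ :=
  ∑ m ∈ Finset.range ((n - 1) / 2 + 1), acoef γ n (2 * m + 1) * r ^ (2 * m + 1)

noncomputable def vTil (γ : ℝ) (n : ℕ) (r : ℝ) : ℝ :=
  2 * ∑ m ∈ Finset.Icc 1 (n / 2), (m : ℝ) * acoef γ n (2 * m) * r ^ (2 * m)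
    - γ * ∑ m ∈ Finset.range ((n - 1) / 2 + 1), acoef γ n (2 * m + 1) * r ^ (2 * m + 2)

noncomputable def wTil (γ : ℝ) (n : ℕ) (r : ℝ) : ℝ :=
  2 * ∑ m ∈ Finset.Icc 1 ((n - 1) / 2), (m : ℝ) * acoef γ n (2 * m + 1) * r ^ (2 * m + 1)
    - γ * ∑ m ∈ Finset.range (n / 2 + 1), acoef γ n (2 * m) * r ^ (2 * m + 1)

noncomputable def phiF (γ : ℝ) (n : ℕ) (r : ℝ) : ℝ :=
  -besselI0 (γ * r) * vPol γ n r + besselI1 (γ * r) * wPol γ n r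

noncomputable def phiHat (γ : ℝ) (n : ℕ) (r : ℝ) : ℝ :=
  (-(Real.eulerMascheroniConstant + Real.log (γ / 2)) * besselI0 (γ * r) + besselS0 (γ * r)) * vPol γ n r
    + (1 / (γ * r) + (Real.eulerMascheroniConstant + Real.log (γ / 2)) * besselI1 (γ * r)
        + besselS1 (γ * r)) * wPol γ n r

noncomputable def phiTil (γ : ℝ) (n : ℕ) (r : ℝ) : ℝ :=
  -besselI0 (γ * r) * vTil γ n r + besselI1 (γ * r) * wTil γ n r

noncomputable def phiHatTil (γ : ℝ) (n : ℕ) (r : ℝ) : ℝ :=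
  (-(Real.eulerMascheroniConstant + Real.log (γ / 2)) * besselI0 (γ * r) + besselS0 (γ * r)) * vTil γ n r
    + (1 / (γ * r) + (Real.eulerMascheroniConstant + Real.log (γ / 2)) * besselI1 (γ * r)
        + besselS1 (γ * r)) * wTil γ n r

noncomputable def etaF (κ cs cp : ℝ) (ℓ n : ℕ) (r : ℝ) : ℝ :=
  (-(ℓ : ℝ)) ^ (ℓ - 1) / (κ ^ 2 * r ^ 2) *
      sumChi n (fun j => phiF (κ / cs) j r - phiF (κ / cp) j r)
    + (-1 : ℝ) ^ (ℓ - 1) / cp ^ 2 * phiF (κ / cp) n r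
    + ((ℓ : ℝ) - 1) / cs ^ 2 * phiF (κ / cs) n r

noncomputable def xiF (κ cs cp : ℝ) (ℓ n : ℕ) (r : ℝ) : ℝ :=
  (-(ℓ : ℝ)) ^ (ℓ - 1) / (κ ^ 2 * r ^ 2) *
      sumChi n (fun j => phiHat (κ / cs) j r - phiHat (κ / cp) j r)
    + (-1 : ℝ) ^ (ℓ - 1) / cp ^ 2 * phiHat (κ / cp) n r
    + ((ℓ : ℝ) - 1) / cs ^ 2 * phiHat (κ / cs) n r

noncomputable def etaTil (κ cs cp : ℝ) (ℓ n : ℕ) (r : ℝ) : ℝ :=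
  (-(ℓ : ℝ)) ^ (ℓ - 1) / (κ ^ 2 * r ^ 2) *
      sumChi n (fun j => phiTil (κ / cs) j r - 2 * phiF (κ / cs) j r
        + 2 * phiF (κ / cp) j r - phiTil (κ / cp) j r)
    + (-1 : ℝ) ^ (ℓ - 1) / cp ^ 2 * phiTil (κ / cp) n r
    + ((ℓ : ℝ) - 1) / cs ^ 2 * phiTil (κ / cs) n r

noncomputable def xiTil (κ cs cp : ℝ) (ℓ n : ℕ) (r : ℝ) : ℝ :=
  (-(ℓ : ℝ)) ^ (ℓ - 1) / (κ ^ 2 * r ^ 2) *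
      sumChi n (fun j => phiHatTil (κ / cs) j r - 2 * phiHat (κ / cs) j r
        + 2 * phiHat (κ / cp) j r - phiHatTil (κ / cp) j r)
    + (-1 : ℝ) ^ (ℓ - 1) / cp ^ 2 * phiHatTil (κ / cp) n r
    + ((ℓ : ℝ) - 1) / cs ^ 2 * phiHatTil (κ / cs) n r

/-!
Dividing `a_{n,m}(γ)` by `γ ^ m` removes `γ`, and the resulting coefficients satisfy a two-term
recurrence in `n`, which gives those with `m ≤ 3` in closed form through the harmonic numbers
`ψ(n)`. Together with the power series of the Bessel functions this yields
`φ̂_n(γ, r) = A_n + γ² B_n r² + O(r⁴)` with `A_n = -(C + ln(γ/2) + ψ(n))` and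
`B_n = (n + 1)(n + 2) A_n / 8 + (5n² + 11n + 4) / 16`. The difference of `A_n` for `γ_s` and `γ_p`
does not depend on `n`, and the stencil `χ` annihilates constants and maps `B_n` to
`A_n / 2 - 1 / 4`. Since `γ² / κ² = 1 / c²`, for `ℓ = 2` the terms in `A_n` cancel against the last
two summands of `ξ_{2,n}`, leaving `1 / (2 c_s²) - 1 / (2 c_p²)`.
-/

noncomputable section

open scoped Topology Nat
open Asymptotics

/-- The coefficients `a_{n,m}(γ) / γ ^ m`, which do not depend on `γ`. They are encoded by a
two-term recurrence in `n` in place of the convolution recurrence defining `acoef`. -/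
def scaledCoeff : ℕ → ℕ → ℝ
  | 0, m => if m = 0 then 1 else 0
  | _ + 1, 0 => 1
  | n + 1, m + 1 =>
    ((n + 1 + 2 * ((m + 1) / 2 : ℕ)) * scaledCoeff n (m + 1) - scaledCoeff n m) / (n + 1)

theorem scaledCoeff_zero_right (n : ℕ) : scaledCoeff n 0 = 1 := by
  cases n <;> simp [scaledCoeff]

theorem succ_mul_scaledCoeff_succ_succ (n m : ℕ) :
    ((n : ℝ) + 1) * scaledCoeff (n + 1) (m + 1) =
      (n + 1 + 2 * ((m + 1) / 2 : ℕ)) * scaledCoeff n (m + 1) - scaledCoeff n m := by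
  rw [scaledCoeff]
  field_simp

theorem scaledCoeff_eq_zero_of_lt {n m : ℕ} (h : n < m) : scaledCoeff n m = 0 := by
  induction n generalizing m with
  | zero => simp [scaledCoeff, h.ne']
  | succ n ih =>
    obtain ⟨m, rfl⟩ := Nat.exists_eq_succ_of_ne_zero (Nat.ne_zero_of_lt h)
    simp [scaledCoeff, ih (show n < m by omega), ih (show n < m + 1 by omega)]

theorem succ_mul_scaledCoeff_succ_self (n : ℕ) :
    ((n : ℝ) + 1) * scaledCoeff (n + 1) (n + 1) = -scaledCoeff n n := by
  rw [succ_mul_scaledCoeff_succ_succ, scaledCoeff_eq_zero_of_lt n.lt_succ_self]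
  ring

theorem psiH_succ (n : ℕ) : psiH (n + 1) = psiH n + 1 / (n + 1) :=
  Finset.sum_range_succ _ n

theorem scaledCoeff_one (n : ℕ) : scaledCoeff n 1 = -psiH n := by
  induction n with
  | zero => simp [scaledCoeff, psiH]
  | succ n ih =>
    simp only [scaledCoeff, scaledCoeff_zero_right, ih, psiH_succ]
    norm_num
    field_simp
    ring

theorem scaledCoeff_two (n : ℕ) : scaledCoeff n 2 = -psiH n / 2 + n * (n + 3) / 8 := by
  induction n with
  | zero => simp [scaledCoeff, psiH]
  | succ n ih =>
    simp only [scaledCoeff, scaledCoeff_one, ih, psiH_succ]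
    norm_num
    field_simp
    ring

theorem scaledCoeff_three (n : ℕ) :
    scaledCoeff n 3 = -(n ^ 2 + 3 * n + 4) / 8 * psiH n + (5 * n ^ 2 + 11 * n) / 16 := by
  induction n with
  | zero => simp [scaledCoeff, psiH]
  | succ n ih =>
    simp only [scaledCoeff, scaledCoeff_two, ih, psiH_succ]
    norm_num
    field_simp
    ring

/-- The convolution `∑_{k<n} (n - k + 1) c_k` occurring in the recurrence for `a_{n,m}(γ)`. -/
def convSum (c : ℕ → ℝ) (n : ℕ) : ℝ :=
  ∑ k ∈ Finset.range n, (n - k + 1) * c k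

theorem convSum_succ (c : ℕ → ℝ) (n : ℕ) :
    convSum c (n + 1) = convSum c n + ∑ k ∈ Finset.range n, c k + 2 * c n := by
  rw [convSum, convSum, Finset.sum_range_succ, ← Finset.sum_add_distrib]
  congr 1
  · exact Finset.sum_congr rfl fun k _ => by push_cast; ring
  · push_cast
    ring

theorem convSum_one (n : ℕ) : convSum (fun _ => 1) n = n * (n + 3) / 2 := by
  induction n with
  | zero => simp [convSum]
  | succ n ih =>
    rw [convSum_succ, ih]
    rw [Finset.sum_const, Finset.card_range, nsmul_eq_mul]
    push_cast
    ring

theorem convSum_congr {c d : ℕ → ℝ} {n : ℕ} (h : ∀ k < n, c k = d k) :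
    convSum c n = convSum d n :=
  Finset.sum_congr rfl fun k hk => by rw [h k (Finset.mem_range.mp hk)]

theorem convSum_const_mul (a : ℝ) (c : ℕ → ℝ) (n : ℕ) :
    convSum (fun k => a * c k) n = a * convSum c n := by
  simp only [convSum, Finset.mul_sum, mul_left_comm]

section TwoTermRecurrence

variable {c d : ℕ → ℝ} {α : ℝ} (h : ∀ n : ℕ, (n + 1) * c (n + 1) = (n + α) * c n - d n)
include h

theorem mul_eq_sum_of_recurrence (n : ℕ) :
    n * c n = α * ∑ k ∈ Finset.range n, c k - ∑ k ∈ Finset.range n, d k := by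
  induction n with
  | zero => simp
  | succ n ih =>
    rw [Finset.sum_range_succ, Finset.sum_range_succ]
    push_cast
    linear_combination ih + h n

theorem sum_eq_convSum_of_recurrence (n : ℕ) :
    (n + 1) * ∑ k ∈ Finset.range n, c k + 2 * n * c n = (1 + α) * convSum c n - convSum d n := by
  induction n with
  | zero => simp [convSum]
  | succ n ih =>
    rw [convSum_succ, convSum_succ, Finset.sum_range_succ]
    push_cast
    linear_combination ih + 2 * h n + mul_eq_sum_of_recurrence h n

theorem convSum_recurrence (n : ℕ) :
    (n + 1) * convSum c (n + 1) = (n + 2 + α) * convSum c n + 2 * c n - convSum d n := by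
  rw [convSum_succ]
  linear_combination sum_eq_convSum_of_recurrence h n

end TwoTermRecurrence

theorem convSum_scaledCoeff_recurrence (n m : ℕ) :
    (n + 1) * convSum (scaledCoeff · (m + 1)) (n + 1) =
      (n + 3 + 2 * ((m + 1) / 2 : ℕ)) * convSum (scaledCoeff · (m + 1)) n
        + 2 * scaledCoeff n (m + 1) - convSum (scaledCoeff · m) n := by
  have h := convSum_recurrence (c := (scaledCoeff · (m + 1))) (d := (scaledCoeff · m))
    (α := 1 + 2 * ((m + 1) / 2 : ℕ))
    (fun k => by linear_combination succ_mul_scaledCoeff_succ_succ k m) n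
  linear_combination h

theorem scaledCoeff_convolution (n m : ℕ) :
    2 * ((m : ℝ) + 1) * scaledCoeff n (m + 1) =
      4 * ((m + 2) / 2 : ℕ) ^ 2 * scaledCoeff n (m + 2) - convSum (scaledCoeff · m) n := by
  induction n generalizing m with
  | zero => simp [scaledCoeff, convSum]
  | succ n ih =>
    cases m with
    | zero =>
      simp only [scaledCoeff_zero_right, convSum_one, zero_add, scaledCoeff_one, scaledCoeff_two]
      norm_num
      ring
    | succ m =>
      have hfloor : (m + 1 + 2) / 2 = (m + 1) / 2 + 1 := by omega
      have hsum : (((m + 1) / 2 : ℕ) : ℝ) + ((m + 2) / 2 : ℕ) = m + 1 := by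
        exact_mod_cast (by omega : (m + 1) / 2 + (m + 2) / 2 = m + 1)
      have hrec₃ := succ_mul_scaledCoeff_succ_succ n (m + 2)
      have hrec₂ := succ_mul_scaledCoeff_succ_succ n (m + 1)
      have hconv := convSum_scaledCoeff_recurrence n m
      have ih₁ := ih (m + 1)
      have ih₀ := ih m
      simp only [add_assoc, Nat.reduceAdd] at hfloor hrec₃ hrec₂ hconv ih₁ ih₀ ⊢
      rw [hfloor] at hrec₃ ih₁ ⊢
      push_cast at hrec₃ ih₁ ⊢
      generalize (((m + 1) / 2 : ℕ) : ℝ) = p at *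
      generalize (((m + 2) / 2 : ℕ) : ℝ) = q at *
      obtain rfl : q = m + 1 - p := by linear_combination hsum
      apply mul_left_cancel₀ (n.cast_add_one_ne_zero (R := ℝ))
      linear_combination -4 * (p + 1) ^ 2 * hrec₃ + 2 * (m + 2) * hrec₂ + hconv
        + (n + 3 + 2 * p) * ih₁ - ih₀

theorem acoef_zero_right (γ : ℝ) (n : ℕ) : acoef γ n 0 = 1 := by
  rw [acoef, if_pos rfl]

theorem acoef_eq_zero_of_lt (γ : ℝ) {n m : ℕ} (h : n < m) : acoef γ n m = 0 := by
  rw [acoef, if_neg (Nat.ne_zero_of_lt h), if_pos h]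

theorem acoef_succ_self (γ : ℝ) (n : ℕ) :
    acoef γ (n + 1) (n + 1) = -(γ / (n + 1)) * acoef γ n n := by
  rw [acoef]
  simp

theorem acoef_succ_of_lt (γ : ℝ) {n m : ℕ} (h : m + 1 < n) :
    acoef γ n (m + 1) = 1 / (2 * γ * (m + 1)) *
      (4 * ((m + 2) / 2 : ℕ) ^ 2 * acoef γ n (m + 2) - γ ^ 2 * convSum (acoef γ · m) n) := by
  have hsum : ∑ k ∈ Finset.Icc m (n - 1), ((n - k + 1 : ℕ) : ℝ) * acoef γ k m
      = convSum (acoef γ · m) n := by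
    refine (Finset.sum_congr rfl fun k hk => ?_).trans
      (Finset.sum_subset (fun k hk => ?_) fun k hk hkm => ?_)
    · rw [Finset.mem_Icc] at hk
      push_cast [Nat.cast_sub (show k ≤ n by omega)]
      rfl
    · rw [Finset.mem_Icc] at hk
      exact Finset.mem_range.mpr (by omega)
    · rw [Finset.mem_range] at hk
      rw [Finset.mem_Icc] at hkm
      simp [acoef_eq_zero_of_lt γ (show k < m by omega)]
  rw [acoef, if_neg m.succ_ne_zero, if_neg h.le.not_gt, if_neg h.ne, Nat.add_sub_cancel,
    Finset.sum_attach _ fun k => ((n - k + 1 : ℕ) : ℝ) * acoef γ k m, hsum]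
  push_cast
  rfl

theorem acoef_eq_pow_mul_scaledCoeff {γ : ℝ} (hγ : γ ≠ 0) (n m : ℕ) :
    acoef γ n m = γ ^ m * scaledCoeff n m := by
  match n, m with
  | n, 0 => simp [acoef_zero_right, scaledCoeff_zero_right]
  | n, m + 1 =>
    rcases lt_trichotomy n (m + 1) with hlt | rfl | hgt
    · rw [acoef_eq_zero_of_lt γ hlt, scaledCoeff_eq_zero_of_lt hlt, mul_zero]
    · rw [acoef_succ_self, acoef_eq_pow_mul_scaledCoeff hγ m m]
      field_simp
      linear_combination -γ ^ (m + 1) * succ_mul_scaledCoeff_succ_self m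
    · have hconv : convSum (acoef γ · m) n = γ ^ m * convSum (scaledCoeff · m) n :=
        (convSum_congr fun k _ => acoef_eq_pow_mul_scaledCoeff hγ k m).trans
          (convSum_const_mul _ _ n)
      rw [acoef_succ_of_lt γ hgt, acoef_eq_pow_mul_scaledCoeff hγ n (m + 2), hconv]
      field_simp
      linear_combination -γ ^ (m + 2) * scaledCoeff_convolution n m
termination_by (n, n - m)

/-- `f r = a + b r² + O(r⁴)` as `r → 0`, `r ≠ 0`. -/
def HasEvenExpansion (f : ℝ → ℝ) (a b : ℝ) : Prop :=
  (fun r => f r - (a + b * r ^ 2)) =O[𝓝[≠] 0] fun r => r ^ 4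

namespace HasEvenExpansion

variable {f g : ℝ → ℝ} {a b c d : ℝ}

theorem congr (hf : HasEvenExpansion f a b) (hfg : ∀ r ≠ 0, f r = g r) (hac : a = c)
    (hbd : b = d) : HasEvenExpansion g c d := by
  subst hac hbd
  refine IsBigO.congr' hf ?_ .rfl
  filter_upwards [self_mem_nhdsWithin] with r hr
  rw [hfg r hr]

theorem of_quadratic (a b : ℝ) : HasEvenExpansion (fun r => a + b * r ^ 2) a b := by
  simpa [HasEvenExpansion] using isBigO_zero _ _

theorem add (hf : HasEvenExpansion f a b) (hg : HasEvenExpansion g c d) :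
    HasEvenExpansion (fun r => f r + g r) (a + c) (b + d) :=
  (IsBigO.add hf hg).congr_left fun r => by ring

theorem const_mul (k : ℝ) (hf : HasEvenExpansion f a b) :
    HasEvenExpansion (fun r => k * f r) (k * a) (k * b) :=
  (IsBigO.const_mul_left hf k).congr_left fun r => by ring

theorem sub (hf : HasEvenExpansion f a b) (hg : HasEvenExpansion g c d) :
    HasEvenExpansion (fun r => f r - g r) (a - c) (b - d) :=
  (IsBigO.sub hf hg).congr_left fun r => by ring

theorem isBigO_one (hf : HasEvenExpansion f a b) : f =O[𝓝[≠] 0] fun _ => (1 : ℝ) := by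
  have hquad : (fun r : ℝ => a + b * r ^ 2) =O[𝓝[≠] 0] fun _ => (1 : ℝ) :=
    (Continuous.tendsto (by fun_prop) 0).mono_left nhdsWithin_le_nhds |>.isBigO_one ℝ
  have hpow : (fun r : ℝ => r ^ 4) =O[𝓝[≠] 0] fun _ => (1 : ℝ) :=
    (Continuous.tendsto (by fun_prop) 0).mono_left nhdsWithin_le_nhds |>.isBigO_one ℝ
  exact ((IsBigO.trans hf hpow).add hquad).congr_left fun r => by ring

theorem mul (hf : HasEvenExpansion f a b) (hg : HasEvenExpansion g c d) :
    HasEvenExpansion (fun r => f r * g r) (a * c) (a * d + b * c) := by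
  have herr_left : (fun r => (f r - (a + b * r ^ 2)) * g r) =O[𝓝[≠] 0] fun r => r ^ 4 := by
    simpa using IsBigO.mul hf hg.isBigO_one
  have herr_right : (fun r => (a + b * r ^ 2) * (g r - (c + d * r ^ 2)))
      =O[𝓝[≠] 0] fun r => r ^ 4 := by
    simpa using IsBigO.mul (of_quadratic a b).isBigO_one hg
  have hcross : (fun r : ℝ => b * d * r ^ 4) =O[𝓝[≠] 0] fun r => r ^ 4 :=
    (isBigO_refl _ _).const_mul_left _
  exact ((herr_left.add herr_right).add hcross).congr_left fun r => by ring

theorem sq_mul (hf : HasEvenExpansion f a b) : HasEvenExpansion (fun r => r ^ 2 * f r) 0 a :=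
  ((of_quadratic 0 1).mul hf).congr (fun r _ => by ring) (by ring) (by ring)

theorem sub_isBigO_sq (hf : HasEvenExpansion f a b) :
    (fun r => f r - a) =O[𝓝[≠] 0] fun r => r ^ 2 := by
  have hpow : (fun r : ℝ => r ^ 4) =O[𝓝[≠] 0] fun r => r ^ 2 :=
    (isLittleO_pow_pow (by norm_num)).isBigO.mono nhdsWithin_le_nhds
  exact ((IsBigO.trans hf hpow).add ((isBigO_refl _ _).const_mul_left b)).congr_left
    fun r => by ring

theorem div_sq_sub_isBigO_sq (hf : HasEvenExpansion f 0 b) :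
    (fun r => f r / r ^ 2 - b) =O[𝓝[≠] 0] fun r => r ^ 2 := by
  refine (IsBigO.mul hf (isBigO_refl (fun r => (r ^ 2)⁻¹) _)).congr' ?_ ?_
  · filter_upwards [self_mem_nhdsWithin] with r (hr : r ≠ 0)
    field_simp
    ring
  · filter_upwards [self_mem_nhdsWithin] with r (hr : r ≠ 0)
    field_simp

end HasEvenExpansion

theorem hasEvenExpansion_tsum {d : ℕ → ℝ} (hd : Summable d) :
    HasEvenExpansion (fun r => ∑' k, d k * r ^ (2 * k)) (d 0) (d 1) := by
  set p := FormalMultilinearSeries.ofScalars ℝ d with hp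
  have hradius : 0 < p.radius :=
    lt_of_lt_of_le (by simp) (p.le_radius_of_summable (r := 1) (by simpa [hp] using hd.norm))
  have htaylor := (p.hasFPowerSeriesOnBall hradius).hasFPowerSeriesAt.isBigO_sub_partialSum_pow 2
  have hsq : Tendsto (fun r : ℝ => r ^ 2) (𝓝[≠] 0) (𝓝 0) :=
    tendsto_nhdsWithin_of_tendsto_nhds (by simpa using (continuous_pow 2).tendsto (0 : ℝ))
  refine (htaylor.comp_tendsto hsq).congr (fun r => ?_) (fun r => ?_)
  · simp [hp, FormalMultilinearSeries.sum, FormalMultilinearSeries.partialSum,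
      Finset.sum_range_succ, pow_mul, mul_comm (d _)]
  · simp [← pow_mul]

theorem hasEvenExpansion_sum_range {d : ℕ → ℝ} {N : ℕ} (hd : ∀ k, N ≤ k → d k = 0) :
    HasEvenExpansion (fun r => ∑ k ∈ Finset.range N, d k * r ^ (2 * k)) (d 0) (d 1) := by
  have hzero : ∀ k ∉ Finset.range N, d k = 0 := fun k hk => hd k (by simpa using hk)
  refine (hasEvenExpansion_tsum (summable_of_ne_finset_zero hzero)).congr
    (fun r _ => tsum_eq_sum fun k hk => ?_) rfl rfl
  rw [hzero k hk, zero_mul]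

theorem hasEvenExpansion_tsum_div_factorial {c : ℕ → ℝ} {C : ℝ} (hc : ∀ k, |c k| ≤ C) (x : ℝ) :
    HasEvenExpansion (fun r => ∑' k, c k * ((x * r) ^ (2 * k) / k !)) (c 0) (c 1 * x ^ 2) := by
  have hsum : Summable fun k => c k * ((x ^ 2) ^ k / k !) := by
    refine .of_norm_bounded ((Real.summable_pow_div_factorial (x ^ 2)).mul_left C) fun k => ?_
    rw [norm_mul, Real.norm_of_nonneg (by positivity : 0 ≤ (x ^ 2) ^ k / k !)]
    exact mul_le_mul_of_nonneg_right (hc k) (by positivity)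
  refine (hasEvenExpansion_tsum hsum).congr (fun r _ => tsum_congr fun k => ?_) (by simp) (by simp)
  rw [mul_pow, pow_mul]
  ring

theorem psiH_nonneg (k : ℕ) : 0 ≤ psiH k :=
  Finset.sum_nonneg fun _ _ => by positivity

theorem psiH_le_factorial (k : ℕ) : psiH k ≤ k ! := by
  have hle : psiH k ≤ k := by
    simpa [psiH] using Finset.sum_le_card_nsmul (Finset.range k) (fun j : ℕ => 1 / ((j : ℝ) + 1)) 1
      fun j _ => div_le_one_of_le₀ (by simp) (by positivity)
  exact hle.trans (by exact_mod_cast k.self_le_factorial)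

theorem abs_inv_factorial_le_one (k : ℕ) : |((k ! : ℝ))⁻¹| ≤ 1 := by
  rw [abs_of_nonneg (by positivity)]
  exact inv_le_one_of_one_le₀ (by exact_mod_cast k.factorial_pos)

theorem hasEvenExpansion_besselI0 (γ : ℝ) :
    HasEvenExpansion (fun r => besselI0 (γ * r)) 1 (γ ^ 2 / 4) := by
  refine (hasEvenExpansion_tsum_div_factorial abs_inv_factorial_le_one (γ / 2)).congr
    (fun r _ => tsum_congr fun k => ?_) (by simp) (by norm_num [div_pow])
  field_simp

theorem hasEvenExpansion_besselS0 (γ : ℝ) :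
    HasEvenExpansion (fun r => besselS0 (γ * r)) 0 (γ ^ 2 / 4) := by
  have hbound (k : ℕ) : |psiH k / k !| ≤ 1 := by
    rw [abs_of_nonneg (div_nonneg (psiH_nonneg k) (by positivity))]
    exact div_le_one_of_le₀ (psiH_le_factorial k) (by positivity)
  refine (hasEvenExpansion_tsum_div_factorial hbound (γ / 2)).congr
    (fun r _ => tsum_congr fun k => ?_) (by simp [psiH]) (by norm_num [psiH, div_pow])
  field_simp

theorem hasEvenExpansion_besselI1_div (γ : ℝ) :
    HasEvenExpansion (fun r => besselI1 (γ * r) / r) (γ / 2) (γ ^ 3 / 16) := by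
  refine ((hasEvenExpansion_tsum_div_factorial (fun k => abs_inv_factorial_le_one (k + 1))
    (γ / 2)).const_mul (γ / 2)).congr (fun r hr => ?_) (by simp)
    (by rw [Nat.factorial_two]; push_cast; ring)
  rw [besselI1, eq_div_iff hr, ← tsum_mul_left, ← tsum_mul_right]
  refine tsum_congr fun k => ?_
  field_simp
  ring

theorem hasEvenExpansion_besselS1_div (γ : ℝ) :
    HasEvenExpansion (fun r => besselS1 (γ * r) / r) (-γ / 4) (-(5 * γ ^ 3) / 64) := by
  have hbound (k : ℕ) : |(psiH (k + 1) + psiH k) / (k + 1)!| ≤ 2 := by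
    rw [abs_of_nonneg (div_nonneg (add_nonneg (psiH_nonneg _) (psiH_nonneg _)) (by positivity)),
      div_le_iff₀ (by positivity)]
    have hfactorial : (k ! : ℝ) ≤ (k + 1)! := by exact_mod_cast Nat.factorial_le k.le_succ
    linarith [psiH_le_factorial k, psiH_le_factorial (k + 1)]
  refine ((hasEvenExpansion_tsum_div_factorial hbound (γ / 2)).const_mul (-γ / 4)).congr
    (fun r hr => ?_) (by simp [psiH]) (by norm_num [psiH, Finset.sum_range_succ]; ring)
  rw [besselS1, eq_div_iff hr, ← tsum_mul_left, ← tsum_mul_left, ← tsum_mul_right]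
  refine tsum_congr fun k => ?_
  field_simp
  ring

theorem hasEvenExpansion_vPol {γ : ℝ} (hγ : γ ≠ 0) (n : ℕ) :
    HasEvenExpansion (vPol γ n) 1 (γ ^ 2 * scaledCoeff n 2) :=
  (hasEvenExpansion_sum_range fun _ _ => acoef_eq_zero_of_lt γ (by omega)).congr
    (fun _ _ => rfl) (acoef_zero_right γ n) (acoef_eq_pow_mul_scaledCoeff hγ n 2)

theorem hasEvenExpansion_wPol_div {γ : ℝ} (hγ : γ ≠ 0) (n : ℕ) :
    HasEvenExpansion (fun r => wPol γ n r / r) (γ * scaledCoeff n 1) (γ ^ 3 * scaledCoeff n 3) := by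
  refine (hasEvenExpansion_sum_range (d := fun m => acoef γ n (2 * m + 1))
    (N := (n - 1) / 2 + 1) fun _ _ => acoef_eq_zero_of_lt γ (by omega)).congr (fun r hr => ?_)
    (by simp [acoef_eq_pow_mul_scaledCoeff hγ]) (acoef_eq_pow_mul_scaledCoeff hγ n 3)
  rw [wPol, eq_div_iff hr, Finset.sum_mul]
  exact Finset.sum_congr rfl fun _ _ => by ring

/-- The constant term `φ̂_n(γ, 0⁺)` of the expansion of `φ̂_n(γ, r)` at `r = 0`. -/
def phiHatConstTerm (γ : ℝ) (n : ℕ) : ℝ :=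
  -(eulerMascheroniConstant + log (γ / 2) + psiH n)

/-- The coefficient of `r²` in the expansion of `φ̂_n(γ, r)` at `r = 0`. -/
def phiHatQuadTerm (γ : ℝ) (n : ℕ) : ℝ :=
  γ ^ 2 * ((n + 1) * (n + 2) / 8 * phiHatConstTerm γ n + (5 * n ^ 2 + 11 * n + 4) / 16)

theorem hasEvenExpansion_phiHat {γ : ℝ} (hγ : γ ≠ 0) (n : ℕ) :
    HasEvenExpansion (phiHat γ n) (phiHatConstTerm γ n) (phiHatQuadTerm γ n) := by
  set L := eulerMascheroniConstant + log (γ / 2) with hL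
  have hv := hasEvenExpansion_vPol hγ n
  have hw := hasEvenExpansion_wPol_div hγ n
  have hI₀S₀ := ((hasEvenExpansion_besselI0 γ).const_mul (-L)).add (hasEvenExpansion_besselS0 γ)
  have hI₁S₁ :=
    ((hasEvenExpansion_besselI1_div γ).const_mul L).add (hasEvenExpansion_besselS1_div γ)
  refine (((hI₀S₀.mul hv).add (hw.const_mul (1 / γ))).add (hI₁S₁.mul hw).sq_mul).congr
    (fun r hr => ?_) ?_ ?_
  · rw [phiHat, ← hL]
    field_simp
    ring
  · rw [phiHatConstTerm, ← hL, scaledCoeff_one]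
    field_simp
    ring
  · rw [phiHatQuadTerm, phiHatConstTerm, ← hL, scaledCoeff_one, scaledCoeff_two, scaledCoeff_three]
    field_simp
    ring

theorem chiC_eq_zero_of_add_neg {n : ℕ} {k : ℤ} (h : n + k < 0) : chiC n k = 0 := by
  rw [chiC]
  split_ifs
  · obtain rfl | rfl : n = 0 ∨ n = 1 := by omega
    all_goals simp
  · obtain rfl : n = 0 := by omega
    simp
  all_goals first | omega | rfl

/-- The truncated subtractions `n - 2` and `n - 1` only occur with coefficient `0`. -/
theorem sumChi_eq (n : ℕ) (f : ℕ → ℝ) :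
    sumChi n f = n * (n - 1) * f (n - 2) - 4 * n ^ 2 * f (n - 1)
      + 2 * (3 * n ^ 2 + 3 * n + 1) * f n - 4 * (n + 1) ^ 2 * f (n + 1)
      + (n + 1) * (n + 2) * f (n + 2) := by
  have hterm (k : ℤ) :
      (if 0 ≤ (n : ℤ) + k then chiC n k * f ((n : ℤ) + k).toNat else 0)
        = chiC n k * f ((n : ℤ) + k).toNat :=
    ite_eq_left_iff.mpr fun hk => by rw [chiC_eq_zero_of_add_neg (not_le.mp hk), zero_mul]
  have hexpand : sumChi n f = chiC n (-2) * f (n - 2) + (chiC n (-1) * f (n - 1)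
      + (chiC n 0 * f n + (chiC n 1 * f (n + 1) + chiC n 2 * f (n + 2)))) := by
    have hIcc : Finset.Icc (-2 : ℤ) 2 = {-2, -1, 0, 1, 2} := by decide
    simp [sumChi, hterm, hIcc,
      show ((n : ℤ) + -2).toNat = n - 2 by omega, show ((n : ℤ) + -1).toNat = n - 1 by omega,
      show ((n : ℤ) + 1).toNat = n + 1 by omega, show ((n : ℤ) + 2).toNat = n + 2 by omega]
  rw [hexpand]
  norm_num [chiC]
  ring

theorem sumChi_sub (n : ℕ) (f g : ℕ → ℝ) :
    sumChi n (fun j => f j - g j) = sumChi n f - sumChi n g := by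
  simp only [sumChi_eq]
  ring

theorem HasEvenExpansion.sumChi {f : ℕ → ℝ → ℝ} {a b : ℕ → ℝ}
    (h : ∀ j, HasEvenExpansion (f j) (a j) (b j)) (n : ℕ) :
    HasEvenExpansion (fun r => sumChi n fun j => f j r) (sumChi n a) (sumChi n b) := by
  simp only [sumChi_eq]
  exact ((((((h _).const_mul _).sub ((h _).const_mul _)).add ((h _).const_mul _)).sub
    ((h _).const_mul _)).add ((h _).const_mul _))

theorem sumChi_const (n : ℕ) (x : ℝ) : sumChi n (fun _ => x) = 0 := by
  rw [sumChi_eq]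
  ring

theorem sumChi_phiHatQuadTerm (γ : ℝ) (n : ℕ) :
    sumChi n (phiHatQuadTerm γ) = γ ^ 2 * (phiHatConstTerm γ n / 2 - 1 / 4) := by
  rw [sumChi_eq]
  simp only [phiHatQuadTerm, phiHatConstTerm, psiH_succ]
  rcases n with _ | _ | n
  · norm_num [psiH]
    ring
  · norm_num [psiH]
    ring
  · simp only [psiH_succ, Nat.add_one_sub_one]
    push_cast
    field_simp
    ring

theorem hasEvenExpansion_sumChi_phiHat_sub {γ δ : ℝ} (hγ : γ ≠ 0) (hδ : δ ≠ 0) (n : ℕ) :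
    HasEvenExpansion (fun r => sumChi n fun j => phiHat γ j r - phiHat δ j r) 0
      (γ ^ 2 * (phiHatConstTerm γ n / 2 - 1 / 4) - δ ^ 2 * (phiHatConstTerm δ n / 2 - 1 / 4)) := by
  have hexp (j : ℕ) := (hasEvenExpansion_phiHat hγ j).sub (hasEvenExpansion_phiHat hδ j)
  have hconst (j : ℕ) : phiHatConstTerm γ j - phiHatConstTerm δ j = log (δ / 2) - log (γ / 2) := by
    simp only [phiHatConstTerm]
    ring
  refine (HasEvenExpansion.sumChi hexp n).congr (fun _ _ => rfl) ?_ ?_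
  · simp only [hconst, sumChi_const]
  · rw [sumChi_sub, sumChi_phiHatQuadTerm, sumChi_phiHatQuadTerm]

theorem xiF_sub_isBigO_sq {κ cs cp : ℝ} (hκ : κ ≠ 0) (hcs : cs ≠ 0) (hcp : cp ≠ 0) (ℓ n : ℕ) :
    (fun r => xiF κ cs cp ℓ n r -
      ((-ℓ) ^ (ℓ - 1) * ((phiHatConstTerm (κ / cs) n / 2 - 1 / 4) / cs ^ 2
          - (phiHatConstTerm (κ / cp) n / 2 - 1 / 4) / cp ^ 2)
        + (-1) ^ (ℓ - 1) / cp ^ 2 * phiHatConstTerm (κ / cp) n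
        + (ℓ - 1) / cs ^ 2 * phiHatConstTerm (κ / cs) n)) =O[𝓝[≠] 0] fun r => r ^ 2 := by
  have hs : κ / cs ≠ 0 := div_ne_zero hκ hcs
  have hp : κ / cp ≠ 0 := div_ne_zero hκ hcp
  have hsum := (hasEvenExpansion_sumChi_phiHat_sub hs hp n).div_sq_sub_isBigO_sq
  have hφs := (hasEvenExpansion_phiHat hs n).sub_isBigO_sq
  have hφp := (hasEvenExpansion_phiHat hp n).sub_isBigO_sq
  refine (((hsum.const_mul_left ((-ℓ) ^ (ℓ - 1) / κ ^ 2)).add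
    (hφp.const_mul_left ((-1) ^ (ℓ - 1) / cp ^ 2))).add
    (hφs.const_mul_left ((ℓ - 1) / cs ^ 2))).congr_left fun r => ?_
  rw [xiF]
  field_simp
  ring

theorem exists_forall_abs_le_of_isBigO_nhdsGT {f g : ℝ → ℝ} {x : ℝ} (h : f =O[𝓝[>] x] g) :
    ∃ ε > 0, ∃ M > 0, ∀ r, x < r → r < x + ε → |f r| ≤ M * |g r| := by
  obtain ⟨M, hM, hbound⟩ := h.exists_pos
  obtain ⟨u, hu, hsub⟩ := mem_nhdsGT_iff_exists_Ioo_subset.mp hbound.bound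
  exact ⟨u - x, sub_pos.mpr hu, M, hM, fun r hxr hru => hsub ⟨hxr, by linarith⟩⟩

end

/-- ξ_{2,n}(r) = 1/(2c_s²) − 1/(2c_p²) + O(r²) as r → 0⁺. -/
theorem xi_two_asymptotics (κ cs cp : ℝ) (hκ : 0 < κ) (hcs : 0 < cs) (hcp : 0 < cp) (n : ℕ) :
    (∃ ε > (0 : ℝ), ∃ M > (0 : ℝ), ∀ r : ℝ, 0 < r → r < ε →
      |xiF κ cs cp 2 n r - (1 / (2 * cs ^ 2) - 1 / (2 * cp ^ 2))| ≤ M * r ^ 2) ∧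
    Tendsto (fun r => xiF κ cs cp 2 n r) (nhdsWithin 0 (Set.Ioi 0))
      (nhds (-(1 / (2 * cp ^ 2)) + 1 / (2 * cs ^ 2))) := by
  have hO : (fun r => xiF κ cs cp 2 n r - (1 / (2 * cs ^ 2) - 1 / (2 * cp ^ 2)))
      =O[nhdsWithin 0 (Set.Ioi 0)] fun r => r ^ 2 := by
    refine ((xiF_sub_isBigO_sq hκ.ne' hcs.ne' hcp.ne' 2 n).congr_left fun r => ?_).mono
      (nhdsGT_le_nhdsNE 0)
    norm_num
    ring
  constructor
  · simpa using exists_forall_abs_le_of_isBigO_nhdsGT hO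
  · have hsq : Tendsto (fun r : ℝ => r ^ 2) (nhdsWithin 0 (Set.Ioi 0)) (nhds 0) :=
      tendsto_nhdsWithin_of_tendsto_nhds (by simpa using (continuous_pow 2).tendsto (0 : ℝ))
    rw [neg_add_eq_sub]
    exact tendsto_sub_nhds_zero_iff.mp (hO.trans_tendsto hsq)
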